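/- Canonical shrinking soliton equation, time–time component (Theorem 1.1): for every compact set K ⊆ U × (a,b) there exist N₀ ∈ ℕ and C > 0 such that for every integer N ≥ N₀ one has ĝ₀₀ > 0 on a neighbourhood of K, and at every point of K: |R̂₀₀ + ∇̂²_{00}(N/(2τ)) − (1/2) ĝ₀₀| ≤ C/N, where N/(2τ) denotes the function (x,τ) ↦ N/(2τ) on Û. (In particular, although each of R̂₀₀ + ∇̂²_{00}(N/(2τ)) and (1/2)ĝ₀₀ has magnitude of order N, their difference has no terms of order 1, only of order 1/N.) -/

import Mathlib

/-!
Work in the ring of smooth functions on an open subset of space-time, with the commuting derivations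
`∂_{xⁱ}` and `∂_τ`. There the coordinate formulas for Christoffel symbols, Ricci tensor and Hessian
become identities of differential algebra, and no differentiability side conditions arise.

For a reverse Ricci flow the contracted Bianchi identity (`IsLeviCivita.contracted_bianchi`) gives the
evolution equation `R_τ = -Δ R - 2 |Ric|²` (`IsLeviCivita.evolution`). Computing the Christoffel
symbols of the block-diagonal metric `ĝ` and eliminating `Δ R` and `|Ric|²` with this equation yields
(`hat_ric`), with `F = ĝ₀₀` and `t = τ⁻¹`,
`R̂₀₀ = -R_τ/2 - n t²/2 + F⁻¹ F_τ (R - n t/2)/2 + t F⁻¹ |∇R|²/4 + t R - n t²/4`,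
while (`hat_hess`) `∇̂²₀₀ (N/(2τ)) = N t³ + N t² F⁻¹ F_τ/4`. Put
`X = R̂₀₀ + ∇̂²₀₀ (N/(2τ)) - F/2`. Since `F = N t³/2 + (R t - n t²/2)`, all terms of `X F` involving `N`
cancel: `X F = B` for a smooth function `B` independent of `N` (`FlowOn.error_mul`).

On a compact set `K` the functions `B` and `R t - n t²/2` are bounded, and `τ < b` gives
`F ≥ N/(4b³)` on `K` for large `N`. Hence `|X| = |B|/F` is at most a constant times `1/N`, and `F > 0` on
an open set containing `K`.
-/

noncomputable section

open scoped BigOperators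

namespace CanonicalSoliton

/-- Space-time `ℝⁿ × ℝ`, a point being `(x, τ)`. -/
abbrev E (n : ℕ) := (Fin n → ℝ) × ℝ

variable {n : ℕ}

/-- Spatial partial derivative `∂_{xⁱ}`. -/
def pdx (i : Fin n) (f : E n → ℝ) (p : E n) : ℝ :=
  fderiv ℝ f p (Pi.single i 1, 0)

/-- Time partial derivative `∂_τ`. -/
def pdt (f : E n → ℝ) (p : E n) : ℝ :=
  fderiv ℝ f p (0, 1)

/-- Coordinate directions on space-time; the index `0` is the time direction `∂/∂τ`,
and the index `i.succ` is the spatial direction `∂/∂xⁱ`. -/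
def dir (a : Fin (n + 1)) : E n :=
  Fin.cases ((0 : Fin n → ℝ), (1 : ℝ)) (fun i => (Pi.single i 1, (0 : ℝ))) a

/-- Partial derivative `∂_{x^a}` on space-time, `x⁰ = τ` being time. -/
def pd (a : Fin (n + 1)) (f : E n → ℝ) (p : E n) : ℝ :=
  fderiv ℝ f p (dir a)

variable (g : E n → Matrix (Fin n) (Fin n) ℝ)

/-- Entries `g^{ij}` of the inverse metric. -/
def ginv (p : E n) : Matrix (Fin n) (Fin n) ℝ := (g p)⁻¹

/-- Christoffel symbols `Γ^i_{jk} = (1/2) g^{il} (∂_{x^j} g_{kl} + ∂_{x^k} g_{jl} − ∂_{x^l} g_{jk})`. -/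
def Chr (i j k : Fin n) (p : E n) : ℝ :=
  (1 / 2) * ∑ l, ginv g p i l *
    (pdx j (fun q => g q k l) p + pdx k (fun q => g q j l) p - pdx l (fun q => g q j k) p)

/-- Ricci tensor `R_{jk} = ∂_{x^i} Γ^i_{jk} − ∂_{x^k} Γ^i_{ji} + Γ^i_{jk} Γ^l_{il} − Γ^l_{ji} Γ^i_{lk}`. -/
def Ric (j k : Fin n) (p : E n) : ℝ :=
  (∑ i, pdx i (Chr g i j k) p) - pdx k (fun q => ∑ i, Chr g i j i q) p
    + (∑ i, ∑ l, Chr g i j k p * Chr g l i l p)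
    - ∑ i, ∑ l, Chr g l j i p * Chr g i l k p

/-- Ricci tensor with one index raised: `R^i_j := g^{ik} R_{kj}`. -/
def RicUp (i j : Fin n) (p : E n) : ℝ := ∑ k, ginv g p i k * Ric g k j p

/-- Scalar curvature `R := g^{jk} R_{jk}`. -/
def scal (p : E n) : ℝ := ∑ j, ∑ k, ginv g p j k * Ric g j k p

/-- `R_τ := ∂_τ R`. -/
def scalτ (p : E n) : ℝ := pdt (scal g) p

/-- Entries of the canonical shrinking-soliton metric `ĝ`:
`ĝ_{ij} = g_{ij}/τ`, `ĝ₀₀ = N/(2τ³) + R/τ − n/(2τ²)`, `ĝ_{0i} = 0`. -/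
def hatg (N : ℕ) (a b : Fin (n + 1)) (p : E n) : ℝ :=
  Fin.cases
    (Fin.cases ((N : ℝ) / (2 * p.2 ^ 3) + scal g p / p.2 - (n : ℝ) / (2 * p.2 ^ 2))
      (fun _ => 0) b)
    (fun i => Fin.cases (0 : ℝ) (fun j => g p i j / p.2) b) a

/-- Entries of the inverse of `ĝ`: `ĝ^{ij} = τ g^{ij}`, `ĝ^{00} = (ĝ₀₀)⁻¹`, `ĝ^{0i} = 0`. -/
def hatginv (N : ℕ) (a b : Fin (n + 1)) (p : E n) : ℝ :=
  Fin.cases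
    (Fin.cases (hatg g N 0 0 p)⁻¹ (fun _ => 0) b)
    (fun i => Fin.cases (0 : ℝ) (fun j => p.2 * ginv g p i j) b) a

/-- Christoffel symbols of `ĝ`:
`Γ̂^a_{bc} = (1/2) ĝ^{ad} (∂_{x^b} ĝ_{cd} + ∂_{x^c} ĝ_{bd} − ∂_{x^d} ĝ_{bc})`. -/
def hatChr (N : ℕ) (a b c : Fin (n + 1)) (p : E n) : ℝ :=
  (1 / 2) * ∑ d, hatginv g N a d p *
    (pd b (hatg g N c d) p + pd c (hatg g N b d) p - pd d (hatg g N b c) p)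

/-- Ricci tensor of `ĝ`:
`R̂_{ab} = ∂_{x^c} Γ̂^c_{ab} − ∂_{x^b} Γ̂^c_{ac} + Γ̂^c_{ab} Γ̂^d_{cd} − Γ̂^d_{ac} Γ̂^c_{bd}`. -/
def hatRic (N : ℕ) (a b : Fin (n + 1)) (p : E n) : ℝ :=
  (∑ c, pd c (hatChr g N c a b) p) - pd b (fun q => ∑ c, hatChr g N c a c q) p
    + (∑ c, ∑ d, hatChr g N c a b p * hatChr g N d c d p)
    - ∑ c, ∑ d, hatChr g N d a c p * hatChr g N c b d p

/-- Hessian with respect to `ĝ`: `∇̂²_{ab} f = ∂_{x^a} ∂_{x^b} f − (∂_{x^c} f) Γ̂^c_{ab}`. -/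
def hatHess (N : ℕ) (f : E n → ℝ) (a b : Fin (n + 1)) (p : E n) : ℝ :=
  pd a (fun q => pd b f q) p - ∑ c, pd c f p * hatChr g N c a b p

end CanonicalSoliton

/-! ### Levi-Civita connections over a ring with commuting derivations -/

namespace CanonicalSoliton

open Matrix
set_option linter.unusedSectionVars false

variable {A : Type*} [CommRing A] [Algebra ℝ A] {ι : Type*} [Fintype ι] [DecidableEq ι]

lemma map_deriv_mul (d : Derivation ℝ A A) (M N : Matrix ι ι A) :
    (M * N).map d = M.map d * N + M * N.map d := by
  ext i j
  simp only [Matrix.map_apply, Matrix.mul_apply, Matrix.add_apply, map_sum, Derivation.leibniz,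
    smul_eq_mul, Finset.sum_add_distrib]
  rw [add_comm]
  congr 1
  exact Finset.sum_congr rfl fun _ _ => mul_comm _ _

lemma map_deriv_one (d : Derivation ℝ A A) : (1 : Matrix ι ι A).map d = 0 := by
  ext i j
  by_cases h : i = j <;> simp [h]

lemma map_deriv_add (d : Derivation ℝ A A) (M N : Matrix ι ι A) :
    (M + N).map d = M.map d + N.map d := by
  ext i j; simp

lemma map_deriv_sub (d : Derivation ℝ A A) (M N : Matrix ι ι A) :
    (M - N).map d = M.map d - N.map d := by
  ext i j; simp

lemma map_deriv_comm (d e : Derivation ℝ A A) (h : ∀ f, d (e f) = e (d f)) (M : Matrix ι ι A) :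
    (M.map e).map d = (M.map d).map e := by
  ext i j; simp [h]

/-- `Γ` is the Levi-Civita connection of the metric `G` with inverse `H`, with respect to the
commuting derivations `D i` playing the role of the coordinate fields. The connection is stored as
matrices: `Γ k` has entries `(Γ k) i j = Γ^i_{kj}`, so that `∇_k = D k + Γ k` on vectors. -/
structure IsLeviCivita (D : ι → Derivation ℝ A A) (G H : Matrix ι ι A)
    (Γ : ι → Matrix ι ι A) : Prop where
  comm : ∀ i j f, D i (D j f) = D j (D i f)
  symm : Gᵀ = G
  mul_inv : G * H = 1
  torsion : ∀ i j k, Γ j i k = Γ k i j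
  compat : ∀ k, G.map (D k) = (Γ k)ᵀ * G + G * Γ k

/-- The curvature endomorphism `[∇_k, ∇_l]`, as a matrix. -/
def curv (D : ι → Derivation ℝ A A) (Γ : ι → Matrix ι ι A) (k l : ι) : Matrix ι ι A :=
  (Γ l).map (D k) - (Γ k).map (D l) + Γ k * Γ l - Γ l * Γ k

/-- The Ricci tensor `R_{jk} = ∑ i, (curv i k)^i_j`. -/
def ricci (D : ι → Derivation ℝ A A) (Γ : ι → Matrix ι ι A) : Matrix ι ι A :=
  Matrix.of fun j k => ∑ i, curv D Γ i k i j

/-- The divergence `∇_k v^k` of a vector `v`. -/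
def divg (D : ι → Derivation ℝ A A) (Γ : ι → Matrix ι ι A) (v : ι → A) : A :=
  ∑ k, D k (v k) + ∑ k, ∑ a, Γ k k a * v a

section
variable {D : ι → Derivation ℝ A A} {G H : Matrix ι ι A} {Γ : ι → Matrix ι ι A}

lemma IsLeviCivita.inv_mul (h : IsLeviCivita D G H Γ) : H * G = 1 :=
  mul_eq_one_comm.mp h.mul_inv

lemma IsLeviCivita.symm_inv (h : IsLeviCivita D G H Γ) : Hᵀ = H := by
  have h1 : Hᵀ * G = 1 := by
    have := congrArg transpose h.mul_inv
    simpa [transpose_mul, h.symm] using this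
  calc Hᵀ = Hᵀ * (G * H) := by rw [h.mul_inv, mul_one]
    _ = H := by rw [← mul_assoc, h1, one_mul]

lemma map_deriv_inv (d : Derivation ℝ A A) (hGH : G * H = 1) (hHG : H * G = 1) :
    H.map d = -(H * G.map d * H) := by
  have h1 : G.map d * H + G * H.map d = 0 := by
    rw [← map_deriv_mul, hGH, map_deriv_one]
  calc H.map d = H * (G * H.map d) := by rw [← mul_assoc, hHG, one_mul]
    _ = H * -(G.map d * H) := by rw [eq_neg_of_add_eq_zero_right h1]
    _ = _ := by rw [mul_neg, mul_assoc]

lemma IsLeviCivita.compat_inv (h : IsLeviCivita D G H Γ) (k : ι) :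
    H.map (D k) = -(Γ k * H + H * (Γ k)ᵀ) := by
  rw [map_deriv_inv (D k) h.mul_inv h.inv_mul, h.compat]
  congr 1
  calc H * ((Γ k)ᵀ * G + G * Γ k) * H
      = H * (Γ k)ᵀ * (G * H) + (H * G) * (Γ k * H) := by noncomm_ring
    _ = _ := by rw [h.mul_inv, h.inv_mul, mul_one, one_mul, add_comm]

/-- Since `∇ H = 0`, raising an index with `H` commutes with covariant differentiation: the
left-hand side is `∇_k` of the contravariant 2-tensor `M H`, the factor on the right is `∇_k M`. -/
lemma IsLeviCivita.cov_raise (h : IsLeviCivita D G H Γ) (k : ι) (M : Matrix ι ι A) :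
    (M * H).map (D k) + Γ k * (M * H) + (M * H) * (Γ k)ᵀ
      = (M.map (D k) + Γ k * M - M * Γ k) * H := by
  rw [map_deriv_mul, h.compat_inv]; noncomm_ring

/-- The second Bianchi identity for the endomorphism-valued curvature (with the Jacobi identity
for `[∇_m, [∇_k, ∇_l]]` as its proof). -/
lemma IsLeviCivita.bianchi (h : IsLeviCivita D G H Γ) (m k l : ι) :
    ((curv D Γ k l).map (D m) + Γ m * curv D Γ k l - curv D Γ k l * Γ m)
    + ((curv D Γ l m).map (D k) + Γ k * curv D Γ l m - curv D Γ l m * Γ k)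
    + ((curv D Γ m k).map (D l) + Γ l * curv D Γ m k - curv D Γ m k * Γ l) = 0 := by
  simp only [curv, map_deriv_sub, map_deriv_add, map_deriv_mul]
  rw [map_deriv_comm (D m) (D k) (h.comm m k), map_deriv_comm (D m) (D l) (h.comm m l),
    map_deriv_comm (D k) (D l) (h.comm k l)]
  noncomm_ring

/-- The curvature with its lower index raised is antisymmetric, because `[D k, D l]` kills `H` and
`∇ H = 0`. -/
lemma IsLeviCivita.antisymm (h : IsLeviCivita D G H Γ) (k l : ι) :
    (curv D Γ k l * H)ᵀ = -(curv D Γ k l * H) := by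
  have e := map_deriv_comm (D k) (D l) (h.comm k l) H
  have tr : ∀ a b, ((Γ a)ᵀ).map (D b) = ((Γ a).map (D b))ᵀ := fun a b => rfl
  have neg : ∀ (d : Derivation ℝ A A) (M : Matrix ι ι A), (-M).map d = -(M.map d) := by
    intro d M; ext i j; simp
  rw [h.compat_inv l, h.compat_inv k] at e
  simp only [neg, map_deriv_add, map_deriv_mul, h.compat_inv, tr] at e
  rw [transpose_mul, h.symm_inv]
  simp only [curv, transpose_add, transpose_sub, transpose_mul]
  rw [← sub_eq_zero] at e ⊢
  rw [← neg_eq_zero, ← e]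
  noncomm_ring

lemma curv_swap (k l : ι) : curv D Γ l k = -curv D Γ k l := by
  simp only [curv]; noncomm_ring

/-- The contracted Bianchi identity `2 ∇_k R^k_m = ∂_m R`. -/
lemma IsLeviCivita.contracted_bianchi (h : IsLeviCivita D G H Γ) (m : ι) :
    2 * ∑ k, ((H * ricci D Γ).map (D k) + Γ k * (H * ricci D Γ) - (H * ricci D Γ) * Γ k) k m
      = D m (∑ k, (H * ricci D Γ) k k) := by
  set P := H * ricci D Γ with hP
  set S : ι → ι → Matrix ι ι A := fun k l => curv D Γ k l * H with hS
  have S1 : ∀ k l i j, S k l i j = - S k l j i := by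
    intro k l i j
    have := congrFun (congrFun (h.antisymm k l) j) i
    simpa using this
  have S2 : ∀ k l i j, S k l i j = - S l k i j := by
    intro k l i j
    simp only [hS]
    rw [curv_swap l k]; simp
  have hHs : ∀ i j, H i j = H j i := fun i j => congrFun (congrFun h.symm_inv j) i
  have PS : ∀ j l, P j l = ∑ k, S k l k j := by
    intro j l
    simp only [hP, hS, ricci, Matrix.mul_apply, Matrix.of_apply, Finset.mul_sum]
    rw [Finset.sum_comm]
    refine Finset.sum_congr rfl fun k _ => Finset.sum_congr rfl fun a _ => ?_
    rw [hHs j a, mul_comm]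
  have hSS : ∀ k l, curv D Γ k l * H = S k l := fun _ _ => rfl
  clear_value P S
  -- the Bianchi identity for the raised curvature `S k l = [∇_k, ∇_l] H`, whose double trace over
  -- `i = k`, `j = l` gives the claim
  have B : ∀ m k l i j, (D m (S k l i j) + ∑ a, Γ m i a * S k l a j + ∑ a, S k l i a * Γ m j a)
      + (D k (S l m i j) + ∑ a, Γ k i a * S l m a j + ∑ a, S l m i a * Γ k j a)
      + (D l (S m k i j) + ∑ a, Γ l i a * S m k a j + ∑ a, S m k i a * Γ l j a) = 0 := by
    intro m k l i j
    have e := congrArg (· * H) (h.bianchi m k l)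
    simp only [add_mul _ _ H, ← h.cov_raise, zero_mul, hSS] at e
    have := congrFun (congrFun e i) j
    simpa [Matrix.mul_apply] using this
  have key : ∑ k, ∑ l, ((D m (S k l k l) + ∑ a, Γ m k a * S k l a l + ∑ a, S k l k a * Γ m l a)
      + (D k (S l m k l) + ∑ a, Γ k k a * S l m a l + ∑ a, S l m k a * Γ k l a)
      + (D l (S m k k l) + ∑ a, Γ l k a * S m k a l + ∑ a, S m k k a * Γ l l a)) = 0 :=
    Finset.sum_eq_zero fun k _ => Finset.sum_eq_zero fun l _ => B m k l k l
  simp only [Finset.sum_add_distrib] at key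
  have two : ∀ x : A, x = -x → x = 0 := by
    intro x hx
    have h2 : (2 : ℝ) • x = 0 := by
      rw [two_smul]; nth_rewrite 2 [hx]; simp
    calc x = (1 / 2 : ℝ) • (2 : ℝ) • x := by rw [smul_smul]; norm_num
      _ = 0 := by rw [h2, smul_zero]
  have t1 : ∑ k, ∑ l, D m (S k l k l) = ∑ k, D m (P k k) := by
    rw [Finset.sum_comm]
    simp only [PS, map_sum]
  have t2 : ∑ k, ∑ l, ∑ a, Γ m k a * S k l a l = ∑ k, ∑ a, Γ m k a * P a k := by
    refine Finset.sum_congr rfl fun k _ => ?_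
    rw [Finset.sum_comm]
    simp only [PS, Finset.mul_sum]
    refine Finset.sum_congr rfl fun a _ => Finset.sum_congr rfl fun l _ => ?_
    rw [S1, S2, neg_neg]
  have t3 : ∑ k, ∑ l, ∑ a, S k l k a * Γ m l a = ∑ k, ∑ a, Γ m k a * P a k := by
    rw [Finset.sum_comm]
    refine Finset.sum_congr rfl fun k _ => ?_
    rw [Finset.sum_comm]
    simp only [PS, Finset.mul_sum]
    refine Finset.sum_congr rfl fun a _ => Finset.sum_congr rfl fun l _ => ?_
    rw [mul_comm]
  have t4 : ∑ k, ∑ l, D k (S l m k l) = -∑ k, D k (P k m) := by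
    simp only [PS, map_sum, ← Finset.sum_neg_distrib]
    refine Finset.sum_congr rfl fun a _ => Finset.sum_congr rfl fun l _ => ?_
    rw [S1, map_neg]
  have t5 : ∑ k, ∑ l, ∑ a, Γ k k a * S l m a l = -∑ k, ∑ a, Γ k k a * P a m := by
    simp only [PS, Finset.mul_sum, ← Finset.sum_neg_distrib]
    refine Finset.sum_congr rfl fun k _ => ?_
    rw [Finset.sum_comm]
    refine Finset.sum_congr rfl fun a _ => Finset.sum_congr rfl fun l _ => ?_
    rw [S1, mul_neg]
  have t6 : ∑ k, ∑ l, ∑ a, S l m k a * Γ k l a = 0 := by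
    apply two
    rw [Finset.sum_comm]
    simp only [← Finset.sum_neg_distrib]
    refine Finset.sum_congr rfl fun l _ => ?_
    rw [Finset.sum_comm]
    refine Finset.sum_congr rfl fun a _ => Finset.sum_congr rfl fun k _ => ?_
    rw [S1, h.torsion l k a, neg_mul]
  have t7 : ∑ k, ∑ l, D l (S m k k l) = -∑ k, D k (P k m) := by
    rw [Finset.sum_comm]
    simp only [PS, map_sum, ← Finset.sum_neg_distrib]
    refine Finset.sum_congr rfl fun a _ => Finset.sum_congr rfl fun l _ => ?_
    rw [S2, map_neg]
  have t8 : ∑ k, ∑ l, ∑ a, Γ l k a * S m k a l = 0 := by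
    apply two
    simp only [← Finset.sum_neg_distrib]
    refine Finset.sum_congr rfl fun l _ => ?_
    rw [Finset.sum_comm]
    refine Finset.sum_congr rfl fun a _ => Finset.sum_congr rfl fun k _ => ?_
    rw [S1, h.torsion l k a, mul_neg]
  have t9 : ∑ k, ∑ l, ∑ a, S m k k a * Γ l l a = -∑ k, ∑ a, Γ k k a * P a m := by
    rw [Finset.sum_comm]
    simp only [PS, Finset.mul_sum, ← Finset.sum_neg_distrib]
    refine Finset.sum_congr rfl fun k _ => ?_
    rw [Finset.sum_comm]
    refine Finset.sum_congr rfl fun a _ => Finset.sum_congr rfl fun l _ => ?_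
    rw [S2]; ring
  have t10 : ∑ k, ∑ a, P k a * Γ k a m = ∑ k, ∑ a, Γ m k a * P a k := by
    rw [Finset.sum_comm]
    refine Finset.sum_congr rfl fun k _ => Finset.sum_congr rfl fun a _ => ?_
    rw [h.torsion k a m, mul_comm]
  rw [t1, t2, t3, t4, t5, t6, t7, t8, t9] at key
  simp only [Matrix.add_apply, Matrix.sub_apply, Matrix.map_apply, Matrix.mul_apply,
    Finset.sum_add_distrib, Finset.sum_sub_distrib, map_sum, t10]
  linear_combination -key

/-- The evolution equation `∂_τ R = -Δ R - 2 |Ric|²` of the scalar curvature under the reverse Ricci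
flow `∂_τ g = 2 Ric`, for any derivation `T` commuting with the `D i`. With `W k = T (Γ k)` and
`Y k = W k * H`, the traces of `W` are found by differentiating the metric compatibility of `Γ` and
using the contracted Bianchi identity; the variation of the curvature is then a covariant exterior
derivative of `W`, whose trace is a divergence. -/
lemma IsLeviCivita.evolution (h : IsLeviCivita D G H Γ) (T : Derivation ℝ A A)
    (hT : ∀ i f, T (D i f) = D i (T f)) (hflow : G.map T = ricci D Γ + ricci D Γ) :
    T (∑ k, (H * ricci D Γ) k k)
      = - divg D Γ (fun k => ∑ j, H k j * D j (∑ k, (H * ricci D Γ) k k))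
        - 2 * ∑ i, ∑ j, (H * ricci D Γ) i j * (H * ricci D Γ) j i := by
  have h2 : ∀ x y : A, 2 * x = 2 * y → x = y := by
    intro x y hx
    have h2 : (2 : ℝ) • x = (2 : ℝ) • y := by
      simpa [two_smul, two_mul] using hx
    calc x = (1 / 2 : ℝ) • (2 : ℝ) • x := by rw [smul_smul]; norm_num
      _ = y := by rw [h2, smul_smul]; norm_num
  have hHs : ∀ i j, H i j = H j i := fun i j => congrFun (congrFun h.symm_inv j) i
  have bian := h.contracted_bianchi
  set Rc := ricci D Γ with hRc
  set P := H * Rc with hP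
  set R := ∑ k, P k k with hR
  set W : ι → Matrix ι ι A := fun k => (Γ k).map T with hW
  set Y : ι → Matrix ι ι A := fun k => W k * H with hY
  have HT : H.map T = -(P * H + P * H) := by
    rw [map_deriv_inv T h.mul_inv h.inv_mul, hflow, hP]
    noncomm_ring
  -- the time derivative of metric compatibility, in raised form
  have YY : ∀ k, Y k + (Y k)ᵀ
      = (P.map (D k) + Γ k * P - P * Γ k) * H + (P.map (D k) + Γ k * P - P * Γ k) * H := by
    intro k
    have e := map_deriv_comm T (D k) (fun f => hT k f) G
    have tr : ∀ a, ((Γ a)ᵀ).map T = (W a)ᵀ := fun a => rfl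
    have tr' : ∀ a, (Γ a).map T = W a := fun a => rfl
    rw [h.compat k, hflow] at e
    simp only [map_deriv_add, map_deriv_mul, hflow, tr, tr'] at e
    have e2 := congrArg (fun M => H * M * H) e
    simp only [hY, transpose_mul, h.symm_inv]
    rw [hP, map_deriv_mul, h.compat_inv]
    have l1 : H * ((W k)ᵀ * G) * H = H * (W k)ᵀ := by
      rw [mul_assoc, mul_assoc, h.mul_inv, mul_one]
    have l2 : H * (G * W k) * H = W k * H := by
      rw [← mul_assoc, h.inv_mul, one_mul]
    have e3 : H * ((W k)ᵀ * G) * H + H * (G * W k) * H =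
        H * (Rc.map (D k) + Rc.map (D k)) * H
          - H * ((Γ k)ᵀ * (Rc + Rc) + (Rc + Rc) * Γ k) * H := by
      rw [← e2]; noncomm_ring
    rw [l1, l2] at e3
    rw [add_comm, e3]
    noncomm_ring
  have Ysum : ∀ j, ∑ k, Y k j k + ∑ k, Y k k j = ∑ m, H j m * D m R := by
    intro j
    have e : ∑ k, (Y k + (Y k)ᵀ) k j
        = ∑ k, ((P.map (D k) + Γ k * P - P * Γ k) * H
          + (P.map (D k) + Γ k * P - P * Γ k) * H) k j := by
      simp only [YY]
    simp only [Matrix.add_apply _ (_ : Matrix ι ι A)ᵀ, Matrix.transpose_apply,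
      Finset.sum_add_distrib] at e
    rw [add_comm, e]
    have e1 : ∀ k, ((P.map (D k) + Γ k * P - P * Γ k) * H
          + (P.map (D k) + Γ k * P - P * Γ k) * H) k j
        = ∑ m, H j m * (2 * (P.map (D k) + Γ k * P - P * Γ k) k m) := by
      intro k
      rw [Matrix.add_apply, ← two_mul, Matrix.mul_apply, Finset.mul_sum]
      refine Finset.sum_congr rfl fun m _ => ?_
      rw [hHs j m]; ring
    simp only [e1, ← bian, Finset.mul_sum]
    rw [Finset.sum_comm]
  -- `∂_τ Γ^i_{ki} = ∂_k R`
  have Wtr : ∀ k, ∑ i, W k i i = D k R := by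
    intro k
    have e := congrArg (fun M => Matrix.trace (M * G)) (YY k)
    have l1 : Y k * G = W k := by simp only [hY]; rw [mul_assoc, h.inv_mul, mul_one]
    have l2 : trace ((Y k)ᵀ * G) = trace (W k) := by
      rw [← trace_transpose, transpose_mul, transpose_transpose, h.symm, trace_mul_comm, l1]
    simp only [add_mul _ _ G, trace_add, l1, l2] at e
    rw [mul_assoc _ H G, h.inv_mul, mul_one, trace_sub, trace_add, trace_mul_comm P] at e
    have e' : 2 * trace (W k) = 2 * D k R := by
      rw [two_mul, e, hR, ← two_mul]
      simp [trace]
    exact h2 _ _ e'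
  have zsum : ∀ j, ∑ k, Y k k j = ∑ m, H j m * D m R := by
    intro j
    simp only [← Wtr, hY, Matrix.mul_apply, Finset.mul_sum]
    rw [Finset.sum_comm]
    refine Finset.sum_congr rfl fun m _ => Finset.sum_congr rfl fun k _ => ?_
    have : W k k m = W m k k := congrArg T (h.torsion k k m)
    rw [this, hHs, mul_comm]
  have Rform : R = ∑ k, ∑ l, (curv D Γ k l * H) k l := by
    simp only [hR, hP, hRc, ricci, Matrix.mul_apply, Matrix.of_apply, Finset.mul_sum]
    calc _ = ∑ a, ∑ l, ∑ k, H a l * curv D Γ k a k l := rfl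
      _ = ∑ a, ∑ k, ∑ l, H a l * curv D Γ k a k l :=
        Finset.sum_congr rfl fun a _ => Finset.sum_comm
      _ = _ := by
        rw [Finset.sum_comm]
        refine Finset.sum_congr rfl fun k _ => Finset.sum_congr rfl fun a _ =>
          Finset.sum_congr rfl fun l _ => ?_
        rw [hHs a l, mul_comm]
  have TΩ : ∀ k l, (curv D Γ k l).map T = (W l).map (D k) - (W k).map (D l)
      + Γ k * W l + W k * Γ l - Γ l * W k - W l * Γ k := by
    intro k l
    simp only [curv, map_deriv_sub, map_deriv_add, map_deriv_mul]
    rw [map_deriv_comm T (D k) (fun f => hT k f), map_deriv_comm T (D l) (fun f => hT l f)]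
    noncomm_ring
  have TΩH : ∀ k l, (curv D Γ k l * H).map T
      = ((Y l).map (D k) + Γ k * Y l + Y l * (Γ k)ᵀ)
        - ((Y k).map (D l) + Γ l * Y k + Y k * (Γ l)ᵀ)
        - (curv D Γ k l * (P * H) + curv D Γ k l * (P * H)) := by
    intro k l
    simp only [hY, h.cov_raise]
    rw [map_deriv_mul, TΩ, HT]
    noncomm_ring
  have Rsymm : ∀ i j, Rc i j = Rc j i := by
    intro i j
    apply h2
    have e1 : T (G i j) = Rc i j + Rc i j := congrFun (congrFun hflow i) j
    have e2 : T (G j i) = Rc j i + Rc j i := congrFun (congrFun hflow j) i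
    have e3 : G j i = G i j := congrFun (congrFun h.symm i) j
    rw [two_mul, two_mul, ← e1, ← e2, e3]
  have Tcurv : ∑ k, ∑ l, (curv D Γ k l * (P * H)) k l = ∑ i, ∑ j, P i j * P j i := by
    have e : ∀ k l, (curv D Γ k l * (P * H)) k l = ∑ j, ∑ a, curv D Γ k l k a * P a j * H j l := by
      intro k l
      rw [← Matrix.mul_assoc, Matrix.mul_apply]
      refine Finset.sum_congr rfl fun j _ => ?_
      rw [Matrix.mul_apply, Finset.sum_mul]
    simp only [e]
    have e2 : ∀ j a, P j a = ∑ l, ∑ k, H j l * curv D Γ k l k a := by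
      intro j a
      simp only [hP, Matrix.mul_apply]
      refine Finset.sum_congr rfl fun l _ => ?_
      rw [Rsymm l a, hRc]
      simp only [ricci, Matrix.of_apply, Finset.mul_sum]
    have e3 : ∑ i, ∑ j, P i j * P j i
        = ∑ i, ∑ j, ∑ l, ∑ k, P i j * (H j l * curv D Γ k l k i) := by
      refine Finset.sum_congr rfl fun i _ => Finset.sum_congr rfl fun j _ => ?_
      rw [e2 j i, Finset.mul_sum]
      exact Finset.sum_congr rfl fun l _ => Finset.mul_sum _ _ _
    rw [e3]
    calc _ = ∑ k, ∑ l, ∑ a, ∑ j, curv D Γ k l k a * P a j * H j l :=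
          Finset.sum_congr rfl fun k _ => Finset.sum_congr rfl fun l _ => Finset.sum_comm
      _ = ∑ k, ∑ a, ∑ l, ∑ j, curv D Γ k l k a * P a j * H j l :=
          Finset.sum_congr rfl fun k _ => Finset.sum_comm
      _ = ∑ a, ∑ k, ∑ l, ∑ j, curv D Γ k l k a * P a j * H j l := Finset.sum_comm
      _ = ∑ a, ∑ k, ∑ j, ∑ l, curv D Γ k l k a * P a j * H j l :=
          Finset.sum_congr rfl fun a _ => Finset.sum_congr rfl fun k _ => Finset.sum_comm
      _ = ∑ a, ∑ j, ∑ k, ∑ l, curv D Γ k l k a * P a j * H j l :=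
          Finset.sum_congr rfl fun a _ => Finset.sum_comm
      _ = ∑ a, ∑ j, ∑ l, ∑ k, curv D Γ k l k a * P a j * H j l :=
          Finset.sum_congr rfl fun a _ => Finset.sum_congr rfl fun j _ => Finset.sum_comm
      _ = _ := by
        refine Finset.sum_congr rfl fun a _ => Finset.sum_congr rfl fun j _ =>
          Finset.sum_congr rfl fun l _ => Finset.sum_congr rfl fun k _ => ?_
        ring
  have TR : T R = ∑ k, ∑ l, (((Y l).map (D k) + Γ k * Y l + Y l * (Γ k)ᵀ) k l
        - ((Y k).map (D l) + Γ l * Y k + Y k * (Γ l)ᵀ) k l)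
        - 2 * ∑ i, ∑ j, P i j * P j i := by
    rw [Rform]
    simp only [map_sum]
    have : ∀ k l, T ((curv D Γ k l * H) k l) = ((curv D Γ k l * H).map T) k l := fun _ _ => rfl
    simp only [this, TΩH, Matrix.sub_apply, Matrix.add_apply _ (curv D Γ _ _ * _),
      Finset.sum_sub_distrib, Finset.sum_add_distrib, Tcurv]
    ring
  have cancel : ∑ k, ∑ l, ∑ a, Y l k a * Γ k l a = ∑ k, ∑ l, ∑ a, Γ l k a * Y k a l := by
    calc _ = ∑ l, ∑ k, ∑ a, Y l k a * Γ k l a := Finset.sum_comm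
      _ = ∑ l, ∑ a, ∑ k, Y l k a * Γ k l a := Finset.sum_congr rfl fun _ _ => Finset.sum_comm
      _ = _ := by
        refine Finset.sum_congr rfl fun l _ => Finset.sum_congr rfl fun a _ =>
          Finset.sum_congr rfl fun k _ => ?_
        rw [h.torsion l k a, mul_comm]
  have q1 : ∑ k, ∑ l, D k (Y l k l) = ∑ k, D k (∑ l, Y l k l) := by simp only [map_sum]
  have q2 : ∑ k, ∑ l, D l (Y k k l) = ∑ k, D k (∑ l, Y l l k) := by
    rw [Finset.sum_comm]; simp only [map_sum]
  have q3 : ∑ k, ∑ l, ∑ a, Γ k k a * Y l a l = ∑ k, ∑ a, Γ k k a * ∑ l, Y l a l := by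
    simp only [Finset.mul_sum]
    exact Finset.sum_congr rfl fun k _ => Finset.sum_comm
  have q4 : ∑ k, ∑ l, ∑ a, Y k k a * Γ l l a = ∑ k, ∑ a, Γ k k a * ∑ l, Y l l a := by
    rw [Finset.sum_comm]
    simp only [Finset.mul_sum]
    refine Finset.sum_congr rfl fun k _ => ?_
    rw [Finset.sum_comm]
    refine Finset.sum_congr rfl fun k _ => Finset.sum_congr rfl fun l _ => mul_comm _ _
  have yz : ∀ j, ∑ k, Y k j k = 0 := by
    intro j
    have e1 := Ysum j
    rw [zsum j] at e1
    linear_combination e1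
  rw [TR]
  simp only [Matrix.add_apply, Matrix.map_apply, Matrix.mul_apply, Matrix.transpose_apply,
    Finset.sum_add_distrib, Finset.sum_sub_distrib]
  rw [q1, q2, q3, q4, cancel]
  simp only [yz, zsum, divg, map_zero, Finset.sum_const_zero, mul_zero]
  ring
end
end CanonicalSoliton

/-! ### Christoffel symbols and Ricci tensor in coordinates -/

namespace CanonicalSoliton
open Matrix
set_option linter.unusedSectionVars false
variable {A : Type*} [CommRing A] [Algebra ℝ A] {ι : Type*} [Fintype ι] [DecidableEq ι]

/-- The constant `1/2` of an `ℝ`-algebra. -/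
def half : A := algebraMap ℝ A (1 / 2)

lemma two_half : (2 : A) * half = 1 := by
  have : (2 : A) = algebraMap ℝ A 2 := (map_ofNat (algebraMap ℝ A) 2).symm
  rw [half, this, ← map_mul]; norm_num

lemma deriv_half (d : Derivation ℝ A A) : d half = 0 := d.map_algebraMap _

/-- The Christoffel symbols `Γ^i_{jk}` of the metric `G` with inverse `H`, with respect to the
derivations `D`. -/
def chr (D : ι → Derivation ℝ A A) (G H : Matrix ι ι A) (i j k : ι) : A :=
  half * ∑ l, H i l * (D j (G k l) + D k (G j l) - D l (G j k))

/-- The Ricci tensor `R_{jk}` of the connection with Christoffel symbols `C i j k = Γ^i_{jk}`,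
written out in coordinates. -/
def ric (D : ι → Derivation ℝ A A) (C : ι → ι → ι → A) (j k : ι) : A :=
  (∑ i, D i (C i j k)) - D k (∑ i, C i j i)
    + (∑ i, ∑ l, C i j k * C l i l) - ∑ i, ∑ l, C l j i * C i l k

/-- The Christoffel symbols in matrix form, `(chrMat D G H k) i j = Γ^i_{kj}`. -/
def chrMat (D : ι → Derivation ℝ A A) (G H : Matrix ι ι A) (k : ι) : Matrix ι ι A :=
  Matrix.of fun i j => chr D G H i k j

section
variable {D : ι → Derivation ℝ A A} {G H : Matrix ι ι A}

lemma chr_symm (hG : Gᵀ = G) (i j k : ι) : chr D G H i j k = chr D G H i k j := by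
  have hs : ∀ a b, G a b = G b a := fun a b => congrFun (congrFun hG b) a
  unfold chr
  congr 1
  refine Finset.sum_congr rfl fun l _ => ?_
  rw [hs j k]; ring

lemma chr_lower (hGH : G * H = 1) (p j k : ι) :
    ∑ i, G p i * chr D G H i j k = half * (D j (G k p) + D k (G j p) - D p (G j k)) := by
  have e : ∀ l, ∑ i, G p i * H i l = if p = l then 1 else 0 := by
    intro l
    rw [← Matrix.mul_apply, hGH, Matrix.one_apply]
  simp only [chr, Finset.mul_sum]
  rw [Finset.sum_comm]
  have : ∀ l, ∑ i, G p i * (half * (H i l * (D j (G k l) + D k (G j l) - D l (G j k))))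
      = (if p = l then 1 else 0) * (half * (D j (G k l) + D k (G j l) - D l (G j k))) := by
    intro l
    rw [← e l, Finset.sum_mul]
    refine Finset.sum_congr rfl fun i _ => ?_
    ring
  simp only [this, ite_mul, one_mul, zero_mul, Finset.sum_ite_eq, Finset.mem_univ, if_true]

lemma isLeviCivita_chrMat (hcomm : ∀ i j f, D i (D j f) = D j (D i f)) (hG : Gᵀ = G)
    (hGH : G * H = 1) : IsLeviCivita D G H (chrMat D G H) where
  comm := hcomm
  symm := hG
  mul_inv := hGH
  torsion i j k := chr_symm hG i j k
  compat k := by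
    have hs : ∀ a b, G a b = G b a := fun a b => congrFun (congrFun hG b) a
    ext i j
    simp only [Matrix.map_apply, Matrix.add_apply, Matrix.mul_apply, Matrix.transpose_apply,
      chrMat, Matrix.of_apply]
    have e1 : ∑ x, chr D G H x k i * G x j = ∑ x, G j x * chr D G H x k i :=
      Finset.sum_congr rfl fun x _ => by rw [hs j x, mul_comm]
    rw [e1, chr_lower hGH, chr_lower hGH, hs j i, hs k i, hs k j]
    linear_combination (-(D k) (G i j)) * (two_half (A := A))

lemma ricci_chrMat (hG : Gᵀ = G) : ricci D (chrMat D G H) = Matrix.of (ric D (chr D G H)) := by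
  ext j k
  simp only [ricci, ric, curv, chrMat, Matrix.of_apply, Matrix.sub_apply, Matrix.add_apply,
    Matrix.map_apply, Matrix.mul_apply, Finset.sum_add_distrib, Finset.sum_sub_distrib, map_sum]
  have e1 : ∑ i, ∑ l, chr D G H i j k * chr D G H l i l
      = ∑ x, ∑ l, chr D G H x x l * chr D G H l k j := by
    rw [Finset.sum_comm]
    refine Finset.sum_congr rfl fun x _ => Finset.sum_congr rfl fun l _ => ?_
    rw [chr_symm hG l j k, chr_symm hG x l x, mul_comm]
  have e2 : ∑ i, ∑ l, chr D G H l j i * chr D G H i l k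
      = ∑ x, ∑ l, chr D G H x k l * chr D G H l x j := by
    refine Finset.sum_congr rfl fun x _ => Finset.sum_congr rfl fun l _ => ?_
    rw [chr_symm hG l j x, chr_symm hG x l k, mul_comm]
  rw [e1, e2]
  congr 3
  · exact Finset.sum_congr rfl fun x _ => by rw [chr_symm hG]
  · exact Finset.sum_congr rfl fun x _ => by rw [chr_symm hG]
end

end CanonicalSoliton

/-! ### The block-diagonal space-time metric -/

namespace CanonicalSoliton
open Matrix
set_option linter.unusedSectionVars false
variable {A : Type*} [CommRing A] [Algebra ℝ A]
section
variable {n : ℕ}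

/-- The space-time derivations: the index `0` is the time derivation `T`, the index `i.succ` is
the spatial derivation `D i`. -/
def hD (T : Derivation ℝ A A) (D : Fin n → Derivation ℝ A A) (a : Fin (n + 1)) :
    Derivation ℝ A A := Fin.cases T D a

/-- The block-diagonal matrix with time-time entry `F` and spatial block `t • G`. It is `ĝ` for
`F = ĝ₀₀`, `t = τ⁻¹`, and its inverse for `F = ĝ₀₀⁻¹`, `t = τ` and `G` replaced by its inverse. -/
def diagBlock (F : A) (t : A) (G : Matrix (Fin n) (Fin n) A) :
    Matrix (Fin (n + 1)) (Fin (n + 1)) A :=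
  Matrix.of fun a b => Fin.cases (Fin.cases F (fun _ => 0) b)
    (fun i => Fin.cases 0 (fun j => t * G i j) b) a

section
variable (F t : A) (G : Matrix (Fin n) (Fin n) A) (i j : Fin n)
@[simp] lemma diagBlock_zero_zero : diagBlock F t G 0 0 = F := rfl
@[simp] lemma diagBlock_zero_succ : diagBlock F t G 0 i.succ = 0 := rfl
@[simp] lemma diagBlock_succ_zero : diagBlock F t G i.succ 0 = 0 := rfl
@[simp] lemma diagBlock_succ_succ : diagBlock F t G i.succ j.succ = t * G i j := rfl
variable (T : Derivation ℝ A A) (D : Fin n → Derivation ℝ A A)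
@[simp] lemma hD_zero : hD T D 0 = T := rfl
@[simp] lemma hD_succ : hD T D i.succ = D i := rfl
end

lemma diagBlock_symm {F t : A} {G : Matrix (Fin n) (Fin n) A} (hG : Gᵀ = G) :
    (diagBlock F t G)ᵀ = diagBlock F t G := by
  ext a b
  refine Fin.cases (Fin.cases rfl (fun j => rfl) b) (fun i => Fin.cases rfl (fun j => ?_) b) a
  exact congrArg (t * ·) (congrFun (congrFun hG i) j)

lemma chr_diagBlock_zero {D : Fin n → Derivation ℝ A A} {T : Derivation ℝ A A}
    {G H : Matrix (Fin n) (Fin n) A} {F Fi t ti : A} :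
    chr (hD T D) (diagBlock F t G) (diagBlock Fi ti H) 0 0 0 = half * Fi * T F := by
  simp [chr, Fin.sum_univ_succ]; ring

/-- The time derivative of `ĝ₀₀`, where `τi = τ⁻¹`. -/
lemma deriv_time_component {T : Derivation ℝ A A} {τi : A} (N n : ℕ) (R : A)
    (hTτi : T τi = - (τi * τi)) :
    T (N * half * τi ^ 3 + R * τi - n * half * τi ^ 2)
      = - 3 * N * half * τi ^ 4 + T R * τi - R * τi ^ 2 + 2 * n * half * τi ^ 3 := by
  simp [hTτi, deriv_half, Derivation.leibniz_pow]
  ring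

/-- The time-time component of the Hessian of `N / (2τ)`. -/
lemma hat_hess {D : Fin n → Derivation ℝ A A} {T : Derivation ℝ A A}
    {G H : Matrix (Fin n) (Fin n) A} {F Fi τ τi : A} {N : ℕ}
    (hTτi : T τi = - (τi * τi)) (hDτi : ∀ i, D i τi = 0) :
    T (T (N * half * τi)) - ∑ c, hD T D c (N * half * τi)
        * chr (hD T D) (diagBlock F τi G) (diagBlock Fi τ H) c 0 0
      = N * τi ^ 3 + N * half * τi ^ 2 * (half * Fi * T F) := by
  have hTf : T (N * half * τi) = -(N * half * τi ^ 2) := by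
    simp [hTτi, deriv_half]; ring
  have hTTf : T (-(N * half * τi ^ 2)) = N * τi ^ 3 := by
    simp [hTτi, deriv_half, Derivation.leibniz_pow]
    linear_combination (N * τi ^ 3 : A) * two_half (A := A)
  have hDf : ∀ i, D i (N * half * τi) = 0 := by
    intro i; simp [hDτi, deriv_half]
  simp only [Fin.sum_univ_succ, hD_zero, hD_succ, hTf, hTTf, hDf, chr_diagBlock_zero, zero_mul,
    Finset.sum_const_zero, add_zero]
  ring

/-- The time-time component of the Ricci tensor of `ĝ`. A direct computation of the space-time
Christoffel symbols brings in `Δ R` and `|Ric|²`; the evolution equation of `R` turns them into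
`T R`. The spatial derivatives of `F = ĝ₀₀` come from `τ⁻¹ R` only. -/
lemma hat_ric {D : Fin n → Derivation ℝ A A} {T : Derivation ℝ A A}
    {G H Rc P : Matrix (Fin n) (Fin n) A} {τ τi R F Fi : A}
    (hcomm : ∀ i j f, D i (D j f) = D j (D i f))
    (hTD : ∀ i f, T (D i f) = D i (T f))
    (hG : Gᵀ = G) (hGH : G * H = 1)
    (hRc : Rc = Matrix.of (ric D (chr D G H)))
    (hP : P = H * Rc)
    (hflow : G.map T = Rc + Rc) (hR : R = ∑ k, P k k)
    (hTτi : T τi = - (τi * τi)) (hDτi : ∀ i, D i τi = 0)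
    (hτ : τ * τi = 1) (hDF : ∀ i, D i F = τi * D i R) :
    ric (hD T D) (chr (hD T D) (diagBlock F τi G) (diagBlock Fi τ H)) 0 0
     = - half * T R - n * half * τi ^ 2 + half * Fi * T F * (R - n * half * τi)
       + half * half * τi * Fi * (∑ i, ∑ j, H i j * D i R * D j R)
       + τi * R - n * half * half * τi ^ 2 := by
  have hLC := isLeviCivita_chrMat hcomm hG hGH
  have hevo := hLC.evolution T hTD (by rw [hflow, hRc, ricci_chrMat hG])
  rw [ricci_chrMat hG, ← hRc, ← hP, ← hR] at hevo
  have hHG := hLC.inv_mul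
  have h2 := two_half (A := A)
  have hdel : ∀ i j, ∑ l, H i l * G l j = if i = j then 1 else 0 := by
    intro i j; rw [← Matrix.mul_apply, hHG, Matrix.one_apply]
  have hs : ∀ a b, G a b = G b a := fun a b => congrFun (congrFun hG b) a
  set c := chr (hD T D) (diagBlock F τi G) (diagBlock Fi τ H) with hc
  have c000 : c 0 0 0 = half * Fi * T F := chr_diagBlock_zero
  have ci00 : ∀ i : Fin n, c i.succ 0 0 = - half * ∑ l, H i l * D l R := by
    intro i
    simp only [hc, chr, Fin.sum_univ_succ]
    simp only [diagBlock_succ_zero, diagBlock_succ_succ, diagBlock_zero_succ, diagBlock_zero_zero,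
      hD_zero, hD_succ, map_zero, zero_mul, zero_add, zero_sub, hDF, Finset.mul_sum]
    refine Finset.sum_congr rfl fun l _ => ?_
    linear_combination (-half * H i l * D l R) * hτ
  have c00i : ∀ i : Fin n, c 0 0 i.succ = half * Fi * (τi * D i R) := by
    intro i
    simp [hc, chr, Fin.sum_univ_succ, hDF]; ring
  have c0i0 : ∀ i : Fin n, c 0 i.succ 0 = half * Fi * (τi * D i R) := by
    intro i
    simp [hc, chr, Fin.sum_univ_succ, hDF]; ring
  -- the mixed symbols `Γ̂^i_{0j} = R^i_j - δ^i_j / (2τ)`, by the flow equation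
  have aux : ∀ i j : Fin n, half * ∑ l, τ * H i l * T (τi * G j l)
      = P i j - half * τi * (if i = j then 1 else 0) := by
    intro i j
    have hRs : ∀ a b, Rc a b = Rc b a := by
      intro a b
      have e1 : T (G a b) = Rc a b + Rc a b := congrFun (congrFun hflow a) b
      have e2 : T (G b a) = Rc b a + Rc b a := congrFun (congrFun hflow b) a
      rw [hs b a] at e2
      linear_combination half * (e2 - e1) - (Rc a b - Rc b a) * h2
    have e : ∀ l, half * (τ * H i l * T (τi * G j l))
        = H i l * Rc l j - half * τi * (H i l * G l j) := by
      intro l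
      have e1 : T (G j l) = Rc j l + Rc j l := congrFun (congrFun hflow j) l
      rw [Derivation.leibniz, hTτi, smul_eq_mul, smul_eq_mul, e1, hs l j, hRs l j]
      linear_combination (H i l * Rc j l * (τ * τi)) * h2
        + (H i l * Rc j l - half * H i l * τi * G j l) * hτ
    rw [Finset.mul_sum]
    simp only [e, Finset.sum_sub_distrib, ← Finset.mul_sum, hdel]
    rw [hP, Matrix.mul_apply]
  have ci0j : ∀ i j : Fin n, c i.succ 0 j.succ = P i j - half * τi * (if i = j then 1 else 0) := by
    intro i j
    rw [← aux]
    simp [hc, chr, Fin.sum_univ_succ]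
  have cij0 : ∀ i j : Fin n, c i.succ j.succ 0 = P i j - half * τi * (if i = j then 1 else 0) := by
    intro i j
    rw [← aux]
    simp [hc, chr, Fin.sum_univ_succ]
  have cijk : ∀ i j k : Fin n, c i.succ j.succ k.succ = chr D G H i j k := by
    intro i j k
    simp only [hc, chr, Fin.sum_univ_succ, diagBlock_succ_zero, diagBlock_succ_succ, hD_succ,
      zero_mul, zero_add, Derivation.leibniz, hDτi, smul_eq_mul, mul_zero, add_zero]
    congr 1
    refine Finset.sum_congr rfl fun l _ => ?_
    linear_combination (H i l * (D j (G k l) + D k (G j l) - D l (G j k))) * hτ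
  simp only [ric, Fin.sum_univ_succ, c000, ci00, c00i, c0i0, ci0j, cij0, cijk, hD_zero, hD_succ]
  have sL : ∑ i, ∑ j, H i j * D i R * D j R = ∑ i, (∑ l, H i l * D l R) * D i R := by
    simp only [Finset.sum_mul]
    exact Finset.sum_congr rfl fun i _ => Finset.sum_congr rfl fun j _ => by ring
  have hPP : ∀ i j, (P i j - half * τi * if i = j then 1 else 0)
      * (P j i - half * τi * if j = i then 1 else 0)
      = P i j * P j i + if i = j then (half * τi * (half * τi) - 2 * (half * τi) * P i i) else 0 := by
    intro i j
    by_cases hij : i = j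
    · subst hij; simp only [if_true]; ring
    · simp [hij, Ne.symm hij]
  have s2 : ∑ x, ∑ y, (P y x - half * τi * if y = x then 1 else 0)
      * (P x y - half * τi * if x = y then 1 else 0)
      = ∑ x, ∑ y, P x y * P y x + n * (half * τi * (half * τi)) - 2 * (half * τi) * R := by
    rw [Finset.sum_comm]
    simp only [hPP, Finset.sum_add_distrib, Finset.sum_ite_eq, Finset.mem_univ, if_true,
      Finset.sum_sub_distrib, ← Finset.mul_sum, Finset.sum_const, Finset.card_univ,
      Fintype.card_fin, nsmul_eq_mul, ← hR]
    ring
  have s1 : ∑ i, (P i i - half * τi * (if True then 1 else 0)) = R - n * half * τi := by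
    simp [hR, Finset.sum_sub_distrib]; ring
  have s3 : T (R - n * half * τi) = T R + n * half * τi ^ 2 := by
    simp [deriv_half, hTτi]; ring
  simp only [divg, chrMat, Matrix.of_apply] at hevo
  rw [sL]
  set v : Fin n → A := fun k => ∑ l, H k l * D l R with hv
  have hvk : ∀ k, ∑ l, H k l * D l R = v k := fun _ => rfl
  simp only [hvk] at hevo ⊢
  have s4 : ∑ i, D i (-half * v i) = -half * ∑ i, D i (v i) := by
    simp [deriv_half, Finset.mul_sum]
  have s5 : ∑ i, (-half * v i * (half * Fi * (τi * D i R)))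
      = -half * (half * Fi * τi) * ∑ i, v i * D i R := by
    rw [Finset.mul_sum]; exact Finset.sum_congr rfl fun i _ => by ring
  have s6 : ∑ i, (half * Fi * (τi * D i R) * (-half * v i))
      = -half * (half * Fi * τi) * ∑ i, v i * D i R := by
    rw [Finset.mul_sum]; exact Finset.sum_congr rfl fun i _ => by ring
  have s7 : ∑ i, -half * v i * ∑ j, chr D G H j i j
      = -half * ∑ k, ∑ a, chr D G H k k a * v a := by
    rw [Finset.sum_comm]
    simp only [Finset.mul_sum]
    refine Finset.sum_congr rfl fun i _ => Finset.sum_congr rfl fun j _ => ?_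
    rw [chr_symm hG j i j]; ring
  simp only [Finset.sum_add_distrib, ← Finset.mul_sum, map_add, s1, s2, s3, s4, s5, s6, s7]
  linear_combination (-half) * hevo + (T R + ∑ x, ∑ y, P x y * P y x + τi * R) * h2
end
end CanonicalSoliton

/-! ### The ring of smooth functions on an open set -/

namespace CanonicalSoliton
open Matrix TopologicalSpace
variable {X : Type*} [NormedAddCommGroup X] [NormedSpace ℝ X]

/-- The ring of smooth functions on the open set `V`. -/
def SmoothRing (V : Opens X) : Subalgebra ℝ (V → ℝ) where
  carrier := {f | ∃ F : X → ℝ, ContDiffOn ℝ (⊤ : ℕ∞) F V ∧ ∀ p : V, F p = f p}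
  mul_mem' := by
    rintro f g ⟨F, hF, hf⟩ ⟨G, hG, hg⟩
    exact ⟨fun p => F p * G p, hF.mul hG, fun p => by simp [hf, hg]⟩
  add_mem' := by
    rintro f g ⟨F, hF, hf⟩ ⟨G, hG, hg⟩
    exact ⟨fun p => F p + G p, hF.add hG, fun p => by simp [hf, hg]⟩
  algebraMap_mem' r := ⟨fun _ => r, contDiffOn_const, fun p => rfl⟩

variable {V : Opens X}

/-- `F` is a representative of `f`: a function on the whole space that agrees with `f` on `V`.
Its values off `V` are unconstrained. -/
def Rep (F : X → ℝ) (f : SmoothRing V) : Prop := ∀ p : V, F p = f.1 p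

/-- The representative that vanishes off `V`. -/
def zeroExt (f : SmoothRing V) : X → ℝ := Function.extend Subtype.val f.1 0

lemma rep_zeroExt (f : SmoothRing V) : Rep (zeroExt f) f := fun p =>
  Subtype.val_injective.extend_apply _ _ p

lemma Rep.eventuallyEq {F F' : X → ℝ} {f : SmoothRing V} (h : Rep F f) (h' : Rep F' f) (p : V) :
    F =ᶠ[nhds (p : X)] F' := by
  filter_upwards [V.2.mem_nhds p.2] with q hq
  exact (h ⟨q, hq⟩).trans (h' ⟨q, hq⟩).symm

lemma Rep.contDiffOn {F : X → ℝ} {f : SmoothRing V} (h : Rep F f) :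
    ContDiffOn ℝ (⊤ : ℕ∞) F V := by
  obtain ⟨F', hF', hf⟩ := f.2
  exact hF'.congr fun p hp => (h ⟨p, hp⟩).trans (hf ⟨p, hp⟩).symm

lemma Rep.contDiffAt {F : X → ℝ} {f : SmoothRing V} (h : Rep F f) (p : V) :
    ContDiffAt ℝ (⊤ : ℕ∞) F p := h.contDiffOn.contDiffAt (V.2.mem_nhds p.2)

lemma Rep.differentiableAt {F : X → ℝ} {f : SmoothRing V} (h : Rep F f) (p : V) :
    DifferentiableAt ℝ F p := (h.contDiffAt p).differentiableAt (by simp)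

lemma exists_rep {F : X → ℝ} (hF : ContDiffOn ℝ (⊤ : ℕ∞) F V) : ∃ f : SmoothRing V, Rep F f :=
  ⟨⟨fun p => F p, F, hF, fun _ => rfl⟩, fun _ => rfl⟩

lemma Rep.unique {F : X → ℝ} {f f' : SmoothRing V} (h : Rep F f) (h' : Rep F f') : f = f' :=
  Subtype.ext (funext fun p => (h p).symm.trans (h' p))

lemma contDiffOn_fderiv {F : X → ℝ} (hF : ContDiffOn ℝ (⊤ : ℕ∞) F V) (v : X) :
    ContDiffOn ℝ (⊤ : ℕ∞) (fun p => fderiv ℝ F p v) V :=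
  (hF.fderiv_of_isOpen V.2 (by simp)).clm_apply contDiffOn_const

lemma Rep.add {F F' : X → ℝ} {f f' : SmoothRing V} (h : Rep F f) (h' : Rep F' f') :
    Rep (fun p => F p + F' p) (f + f') := fun p => congrArg₂ (· + ·) (h p) (h' p)
lemma Rep.sub {F F' : X → ℝ} {f f' : SmoothRing V} (h : Rep F f) (h' : Rep F' f') :
    Rep (fun p => F p - F' p) (f - f') := fun p => congrArg₂ (· - ·) (h p) (h' p)
lemma Rep.mul {F F' : X → ℝ} {f f' : SmoothRing V} (h : Rep F f) (h' : Rep F' f') :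
    Rep (fun p => F p * F' p) (f * f') := fun p => congrArg₂ (· * ·) (h p) (h' p)
lemma Rep.neg {F : X → ℝ} {f : SmoothRing V} (h : Rep F f) :
    Rep (fun p => - F p) (-f) := fun p => congrArg Neg.neg (h p)
lemma Rep.pow {F : X → ℝ} {f : SmoothRing V} (h : Rep F f) (k : ℕ) :
    Rep (fun p => F p ^ k) (f ^ k) := fun p => congrArg (· ^ k) (h p)
lemma Rep.const (r : ℝ) : Rep (fun _ : X => r) (algebraMap ℝ (SmoothRing V) r) := fun _ => rfl
lemma Rep.zero : Rep (fun _ : X => 0) (0 : SmoothRing V) := fun _ => rfl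
lemma Rep.one : Rep (fun _ : X => 1) (1 : SmoothRing V) := fun _ => rfl
lemma Rep.natCast (n : ℕ) : Rep (fun _ : X => (n : ℝ)) (n : SmoothRing V) := fun _ => rfl
lemma Rep.half : Rep (fun _ : X => 1 / 2) (half : SmoothRing V) := fun _ => rfl

lemma Rep.sum {α : Type*} [Fintype α] {F : α → X → ℝ} {f : α → SmoothRing V}
    (h : ∀ a, Rep (F a) (f a)) : Rep (fun p => ∑ a, F a p) (∑ a, f a) := by
  classical
  have : ∀ s : Finset α, Rep (fun p => ∑ a ∈ s, F a p) (∑ a ∈ s, f a) := by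
    intro s
    induction s using Finset.induction_on with
    | empty => simpa using Rep.zero
    | insert a s ha ih => simpa [Finset.sum_insert ha] using (h a).add ih
  exact this _

/-- The directional derivative along `v`, as a derivation of the ring of smooth functions. -/
def dirDeriv (V : Opens X) (v : X) : Derivation ℝ (SmoothRing V) (SmoothRing V) :=
  Derivation.mk'
    { toFun := fun f => ⟨fun p => fderiv ℝ (zeroExt f) p v, fun p => fderiv ℝ (zeroExt f) p v,
        contDiffOn_fderiv (rep_zeroExt f).contDiffOn v, fun _ => rfl⟩
      map_add' := fun f g => by
        apply Subtype.ext; funext p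
        have h := (rep_zeroExt f).add (rep_zeroExt g)
        have e := ((rep_zeroExt (f + g)).eventuallyEq h p).fderiv_eq (𝕜 := ℝ)
        change fderiv ℝ (zeroExt (f + g)) p v = fderiv ℝ (zeroExt f) p v + fderiv ℝ (zeroExt g) p v
        rw [e, fderiv_fun_add ((rep_zeroExt f).differentiableAt p)
          ((rep_zeroExt g).differentiableAt p)]
        rfl
      map_smul' := fun r f => by
        apply Subtype.ext; funext p
        have h : Rep (fun q => r * zeroExt f q) (r • f) := fun q =>
          congrArg (r * ·) (rep_zeroExt f q)
        have e := ((rep_zeroExt (r • f)).eventuallyEq h p).fderiv_eq (𝕜 := ℝ)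
        change fderiv ℝ (zeroExt (r • f)) p v = r * fderiv ℝ (zeroExt f) p v
        rw [e, fderiv_const_mul ((rep_zeroExt f).differentiableAt p)]
        rfl }
    fun f g => by
      apply Subtype.ext; funext p
      have h := (rep_zeroExt f).mul (rep_zeroExt g)
      have e := ((rep_zeroExt (f * g)).eventuallyEq h p).fderiv_eq (𝕜 := ℝ)
      change fderiv ℝ (zeroExt (f * g)) p v
        = f.1 p * fderiv ℝ (zeroExt g) p v + g.1 p * fderiv ℝ (zeroExt f) p v
      rw [e, fderiv_fun_mul ((rep_zeroExt f).differentiableAt p)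
          ((rep_zeroExt g).differentiableAt p), ← rep_zeroExt f p, ← rep_zeroExt g p]
      rfl

lemma Rep.fderiv {F : X → ℝ} {f : SmoothRing V} (h : Rep F f) (v : X) :
    Rep (fun p => fderiv ℝ F p v) (dirDeriv V v f) := fun p => by
  have e := (h.eventuallyEq (rep_zeroExt f) p).fderiv_eq (𝕜 := ℝ)
  change _root_.fderiv ℝ F p v = _root_.fderiv ℝ (zeroExt f) p v
  rw [e]

/-- Directional derivatives commute, by the symmetry of the second derivative. -/
lemma dirDeriv_comm (v w : X) (f : SmoothRing V) :
    dirDeriv V v (dirDeriv V w f) = dirDeriv V w (dirDeriv V v f) := by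
  have h := rep_zeroExt f
  refine ((h.fderiv w).fderiv v).unique ?_
  intro p
  rw [← (h.fderiv v).fderiv w p]
  have hs : IsSymmSndFDerivAt ℝ (zeroExt f) p :=
    (h.contDiffAt p).isSymmSndFDerivAt (by
      simp only [minSmoothness_of_isRCLikeNormedField]
      exact WithTop.coe_le_coe.2 (le_top (a := (2 : ℕ∞))))
  have hd : DifferentiableAt ℝ (_root_.fderiv ℝ (zeroExt f)) p :=
    ((h.contDiffAt p).fderiv_right (m := 1) (by norm_cast)).differentiableAt (by simp)
  have key : ∀ a b : X, _root_.fderiv ℝ (fun q => _root_.fderiv ℝ (zeroExt f) q a) p b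
      = _root_.fderiv ℝ (_root_.fderiv ℝ (zeroExt f)) p b a := by
    intro a b
    rw [fderiv_clm_apply hd (differentiableAt_const a)]
    simp
  beta_reduce
  rw [key, key]
  exact hs v w

lemma exists_inv {f : SmoothRing V} (h : ∀ p, f.1 p ≠ 0) : ∃ fi : SmoothRing V, f * fi = 1 := by
  have hF := (rep_zeroExt f).contDiffOn
  obtain ⟨fi, hfi⟩ := exists_rep (hF.inv fun p hp => by
    rw [rep_zeroExt f ⟨p, hp⟩]; exact h _)
  refine ⟨fi, ((rep_zeroExt f).mul hfi).unique fun p => ?_⟩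
  change zeroExt f p * (zeroExt f p)⁻¹ = 1
  rw [rep_zeroExt f p]
  exact mul_inv_cancel₀ (h p)

lemma Rep.inv {F : X → ℝ} {f fi : SmoothRing V} (h : Rep F f) (hfi : f * fi = 1) :
    Rep (fun p => (F p)⁻¹) fi := fun p => by
  have : f.1 p * fi.1 p = 1 := congrFun (congrArg Subtype.val hfi) p
  beta_reduce
  rw [h p]
  exact inv_eq_of_mul_eq_one_right this

/-- A pointwise invertible matrix of smooth functions is invertible over the ring of smooth
functions, and its inverse is computed pointwise. -/
lemma Rep.matrix_inv {n : ℕ} {M : X → Matrix (Fin n) (Fin n) ℝ}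
    {G : Matrix (Fin n) (Fin n) (SmoothRing V)}
    (h : ∀ i j, Rep (fun p => M p i j) (G i j)) (hdet : ∀ p : V, (M p).det ≠ 0) :
    ∃ H : Matrix (Fin n) (Fin n) (SmoothRing V), G * H = 1 ∧
      ∀ i j, Rep (fun p => (M p)⁻¹ i j) (H i j) := by
  let ev : V → SmoothRing V →+* ℝ := fun p => (Pi.evalRingHom _ p).comp (SmoothRing V).subtype
  have hM : ∀ p : V, (ev p).mapMatrix G = M p := fun p => by
    ext i j; exact (h i j p).symm
  have hd : ∀ p : V, (G.det).1 p = (M p).det := fun p => by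
    rw [← hM, ← RingHom.map_det]; rfl
  obtain ⟨di, hdi⟩ := exists_inv (f := G.det) fun p => by rw [hd]; exact hdet p
  have hu : IsUnit G.det := IsUnit.of_mul_eq_one _ hdi
  refine ⟨G⁻¹, mul_nonsing_inv G hu, fun i j p => ?_⟩
  have e : M p * (ev p).mapMatrix G⁻¹ = 1 := by
    rw [← hM, ← map_mul, mul_nonsing_inv G hu, map_one]
  beta_reduce
  rw [Matrix.inv_eq_right_inv e]
  rfl
end CanonicalSoliton

/-! ### The space-time metric of a reverse Ricci flow -/

namespace CanonicalSoliton
open Matrix TopologicalSpace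
variable {n : ℕ} {V : Opens (E n)}

/-- The spatial coordinate derivation `∂_{xⁱ}` on smooth functions. -/
abbrev dx (V : Opens (E n)) (i : Fin n) : Derivation ℝ (SmoothRing V) (SmoothRing V) :=
  dirDeriv V (Pi.single i 1, 0)

/-- The time derivation `∂_τ` on smooth functions. -/
abbrev dt (V : Opens (E n)) : Derivation ℝ (SmoothRing V) (SmoothRing V) :=
  dirDeriv V (0, 1)

lemma hD_eq : hD (dt V) (dx V) = fun a => dirDeriv V (dir a) := by
  funext a
  refine Fin.cases rfl (fun i => rfl) a

/-- `g` is a smooth solution of the reverse Ricci flow on `V`, a set of positive times. Of positive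
definiteness only the invertibility of `g` is kept. -/
structure FlowOn (g : E n → Matrix (Fin n) (Fin n) ℝ) (V : Opens (E n)) : Prop where
  smooth : ∀ i j, ContDiffOn ℝ (⊤ : ℕ∞) (fun p => g p i j) V
  symm : ∀ p ∈ V, (g p).IsSymm
  det_ne : ∀ p ∈ V, (g p).det ≠ 0
  flow : ∀ p ∈ V, ∀ j k : Fin n, pdt (fun q => g q j k) p = 2 * Ric g j k p
  pos : ∀ p ∈ V, 0 < p.2

section rep
variable {g : E n → Matrix (Fin n) (Fin n) ℝ} {G H : Matrix (Fin n) (Fin n) (SmoothRing V)}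

lemma rep_Chr
    (hG : ∀ i j, Rep (fun p => g p i j) (G i j))
    (hH : ∀ i j, Rep (fun p => ginv g p i j) (H i j))
    (i j k : Fin n) : Rep (Chr g i j k) (chr (dx V) G H i j k) :=
  Rep.half.mul (Rep.sum fun l => (hH i l).mul
    ((((hG k l).fderiv _).add ((hG j l).fderiv _)).sub ((hG j k).fderiv _)))

lemma rep_Ric
    (hG : ∀ i j, Rep (fun p => g p i j) (G i j))
    (hH : ∀ i j, Rep (fun p => ginv g p i j) (H i j))
    (j k : Fin n) : Rep (Ric g j k) (ric (dx V) (chr (dx V) G H) j k) :=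
  have h := rep_Chr hG hH
  (((Rep.sum fun i => (h i j k).fderiv _).sub ((Rep.sum fun i => h i j i).fderiv _)).add
    (Rep.sum fun i => Rep.sum fun l => (h i j k).mul (h l i l))).sub
    (Rep.sum fun i => Rep.sum fun l => (h l j i).mul (h i l k))

lemma rep_scal
    (hG : ∀ i j, Rep (fun p => g p i j) (G i j))
    (hH : ∀ i j, Rep (fun p => ginv g p i j) (H i j)) : Rep (scal g) (∑ j, ∑ k, H j k * ric (dx V) (chr (dx V) G H) j k) :=
  Rep.sum fun j => Rep.sum fun k => (hH j k).mul (rep_Ric hG hH j k)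

end rep

section hatrep
variable {g : E n → Matrix (Fin n) (Fin n) ℝ} {N : ℕ}
  {G H : Matrix (Fin (n + 1)) (Fin (n + 1)) (SmoothRing V)}

lemma rep_hatChr
    (hG : ∀ i j, Rep (hatg g N i j) (G i j))
    (hH : ∀ i j, Rep (hatginv g N i j) (H i j))
    (i j k : Fin (n + 1)) :
    Rep (hatChr g N i j k) (chr (hD (dt V) (dx V)) G H i j k) := by
  rw [hD_eq]
  exact Rep.half.mul (Rep.sum fun l => (hH i l).mul
    ((((hG k l).fderiv _).add ((hG j l).fderiv _)).sub ((hG j k).fderiv _)))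

lemma rep_hatRic
    (hG : ∀ i j, Rep (hatg g N i j) (G i j))
    (hH : ∀ i j, Rep (hatginv g N i j) (H i j))
    (hs : Gᵀ = G) (j k : Fin (n + 1)) :
    Rep (hatRic g N j k)
      (ric (hD (dt V) (dx V)) (chr (hD (dt V) (dx V)) G H) j k) := by
  have h := rep_hatChr hG hH
  have h' : ∀ i l, Rep (hatChr g N i k l) (chr (hD (dt V) (dx V)) G H i l k) := fun i l => by
    rw [chr_symm hs]; exact h i k l
  rw [hD_eq] at h h' ⊢
  exact (((Rep.sum fun i => (h i j k).fderiv _).sub ((Rep.sum fun i => h i j i).fderiv _)).add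
    (Rep.sum fun i => Rep.sum fun l => (h i j k).mul (h l i l))).sub
    (Rep.sum fun i => Rep.sum fun l => (h l j i).mul (h' i l))

lemma rep_hatHess
    (hG : ∀ i j, Rep (hatg g N i j) (G i j))
    (hH : ∀ i j, Rep (hatginv g N i j) (H i j))
    {f : E n → ℝ} {f' : SmoothRing V} (hf : Rep f f') (j k : Fin (n + 1)) :
    Rep (hatHess g N f j k) (hD (dt V) (dx V) j (hD (dt V) (dx V) k f')
      - ∑ c, hD (dt V) (dx V) c f' * chr (hD (dt V) (dx V)) G H c j k) := by
  have h := rep_hatChr hG hH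
  rw [hD_eq] at h ⊢
  exact ((hf.fderiv _).fderiv _).sub (Rep.sum fun c => (hf.fderiv _).mul (h c j k))

end hatrep

/-- The squared gradient `|∇R|²` of the scalar curvature. -/
def gradSq (g : E n → Matrix (Fin n) (Fin n) ℝ) (p : E n) : ℝ :=
  ∑ i, ∑ j, ginv g p i j * pdx i (scal g) p * pdx j (scal g) p

/-- The time function and its inverse as smooth functions, with the derivatives of `τ⁻¹`. -/
lemma exists_time (hpos : ∀ p ∈ V, 0 < p.2) : ∃ τ τi : SmoothRing V,
    Rep (fun p => p.2) τ ∧ Rep (fun p => p.2⁻¹) τi ∧ τ * τi = 1 ∧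
    dt V τi = -(τi * τi) ∧ ∀ i, dx V i τi = 0 := by
  obtain ⟨τ, hτ⟩ := exists_rep (V := V) (F := fun p : E n => p.2) contDiff_snd.contDiffOn
  obtain ⟨τi, h1⟩ := exists_inv (f := τ) fun p => by rw [← hτ p]; exact (hpos p p.2).ne'
  have hd : ∀ v : E n, dirDeriv V v τ = algebraMap ℝ _ v.2 := fun v =>
    (hτ.fderiv v).unique fun p => by
      beta_reduce
      rw [fderiv_snd]; rfl
  have hdi : ∀ v : E n, dirDeriv V v τi = - (algebraMap ℝ _ v.2 * (τi * τi)) := by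
    intro v
    have e := congrArg (dirDeriv V v) h1
    rw [Derivation.leibniz, Derivation.map_one_eq_zero, hd, smul_eq_mul, smul_eq_mul] at e
    linear_combination τi * e - dirDeriv V v τi * h1
  refine ⟨τ, τi, hτ, hτ.inv h1, h1, ?_, fun i => ?_⟩
  · rw [hdi]; simp
  · rw [hdi]; simp

/-- The metric and its inverse as matrices over the ring of smooth functions. -/
lemma FlowOn.exists_metric {g : E n → Matrix (Fin n) (Fin n) ℝ} (h : FlowOn g V) :
    ∃ G H : Matrix (Fin n) (Fin n) (SmoothRing V),
      (∀ i j, Rep (fun p => g p i j) (G i j)) ∧ (∀ i j, Rep (fun p => ginv g p i j) (H i j)) ∧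
      Gᵀ = G ∧ G * H = 1 ∧ G.map (dt V) = Matrix.of (ric (dx V) (chr (dx V) G H))
        + Matrix.of (ric (dx V) (chr (dx V) G H)) := by
  choose G hG using fun i j => exists_rep (h.smooth i j)
  obtain ⟨H, hGH, hH⟩ := Rep.matrix_inv (M := g) (G := Matrix.of G) hG fun p => h.det_ne p p.2
  refine ⟨Matrix.of G, H, hG, hH, ?_, hGH, ?_⟩
  · ext i j : 1
    exact (hG j i).unique fun p => ((h.symm p p.2).apply i j).trans (hG i j p)
  · ext i j : 1
    refine ((hG i j).fderiv _).unique fun p => ?_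
    have e := h.flow p p.2 i j
    rw [two_mul] at e
    exact e.trans (((rep_Ric hG hH i j).add (rep_Ric hG hH i j)) p)

/-- The algebraic formulas for `∂_τ ĝ₀₀`, `R̂₀₀` and `∇̂²₀₀ (N / (2τ))`, evaluated at points of `V`. -/
theorem FlowOn.hat_components {g : E n → Matrix (Fin n) (Fin n) ℝ} (h : FlowOn g V) (N : ℕ)
    (hF : ∀ p ∈ V, 0 < hatg g N 0 0 p) (p : E n) (hp : p ∈ V) :
    pdt (hatg g N 0 0) p = - (3 / 2) * N * p.2⁻¹ ^ 4 + scalτ g p * p.2⁻¹ - scal g p * p.2⁻¹ ^ 2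
      + n * p.2⁻¹ ^ 3 ∧
    hatRic g N 0 0 p = - (1 / 2) * scalτ g p - n * (1 / 2) * p.2⁻¹ ^ 2
        + (1 / 2) * (hatg g N 0 0 p)⁻¹ * pdt (hatg g N 0 0) p * (scal g p - n * (1 / 2) * p.2⁻¹)
        + (1 / 2) * (1 / 2) * p.2⁻¹ * (hatg g N 0 0 p)⁻¹ * gradSq g p
        + p.2⁻¹ * scal g p - n * (1 / 2) * (1 / 2) * p.2⁻¹ ^ 2 ∧
    hatHess g N (fun q => (N : ℝ) / (2 * q.2)) 0 0 p = N * p.2⁻¹ ^ 3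
      + N * (1 / 2) * p.2⁻¹ ^ 2 * ((1 / 2) * (hatg g N 0 0 p)⁻¹ * pdt (hatg g N 0 0) p) := by
  obtain ⟨τ, τi, hτ, hτi, h1, hTτi, hDτi⟩ := exists_time h.pos
  obtain ⟨G, H, hG, hH, hs, hGH, hflow⟩ := h.exists_metric
  have hR := rep_scal hG hH
  set Rc := Matrix.of (ric (dx V) (chr (dx V) G H)) with hRc
  set R := ∑ j, ∑ k, H j k * ric (dx V) (chr (dx V) G H) j k with hRdef
  have hRtr : R = ∑ k, (H * Rc) k k := by
    have hRs : ∀ a b, Rc a b = Rc b a := by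
      intro a b
      have e1 : dt V (G a b) = Rc a b + Rc a b := congrFun (congrFun hflow a) b
      have e2 : dt V (G b a) = Rc b a + Rc b a := congrFun (congrFun hflow b) a
      have e3 : G b a = G a b := congrFun (congrFun hs a) b
      rw [e3] at e2
      linear_combination half * (e2 - e1) - (Rc a b - Rc b a) * two_half (A := SmoothRing V)
    simp only [Matrix.mul_apply]
    refine Finset.sum_congr rfl fun j _ => Finset.sum_congr rfl fun k _ => ?_
    rw [hRs k j]; rfl
  -- the time-time component and its inverse
  set F : SmoothRing V := N * half * τi ^ 3 + R * τi - n * half * τi ^ 2 with hFdef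
  have repF : Rep (hatg g N 0 0) F := fun q => by
    have := ((((Rep.natCast N).mul Rep.half).mul (hτi.pow 3)).add (hR.mul hτi)).sub
      (((Rep.natCast n).mul Rep.half).mul (hτi.pow 2)) q
    rw [← this]
    change (N : ℝ) / (2 * (q : E n).2 ^ 3) + scal g q / (q : E n).2 - (n : ℝ) / (2 * (q : E n).2 ^ 2)
      = _
    have := (h.pos q q.2).ne'
    field_simp
  obtain ⟨Fi, hFi⟩ := exists_inv (f := F) fun q => by rw [← repF q]; exact (hF q q.2).ne'
  have repFi := repF.inv hFi
  have hDF : ∀ i, dx V i F = τi * dx V i R := by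
    intro i
    simp [hFdef, hDτi, deriv_half, Derivation.leibniz_pow]
  have hTF := deriv_time_component N n R hTτi
  rw [← hFdef] at hTF
  have hric := hat_ric (fun i j f => dirDeriv_comm _ _ f) (fun i f => dirDeriv_comm _ _ f) hs hGH
    hRc rfl hflow hRtr hTτi hDτi h1 (Fi := Fi) hDF
  have rhatg : ∀ i j, Rep (hatg g N i j) (diagBlock F τi G i j) := by
    intro i j
    refine Fin.cases (Fin.cases repF (fun j => Rep.zero) j) (fun i => ?_) i
    refine Fin.cases Rep.zero (fun j q => ?_) j
    rw [diagBlock_succ_succ, ← (hτi.mul (hG i j)) q]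
    change g q i j / (q : E n).2 = _
    rw [div_eq_inv_mul]
  have rhatginv : ∀ i j, Rep (hatginv g N i j) (diagBlock Fi τ H i j) := by
    intro i j
    refine Fin.cases (Fin.cases repFi (fun j => Rep.zero) j) (fun i => ?_) i
    exact Fin.cases Rep.zero (fun j => hτ.mul (hH i j)) j
  have ptF : pdt (hatg g N 0 0) p = (dt V F).1 ⟨p, hp⟩ := repF.fderiv (0, 1) ⟨p, hp⟩
  have pR : scal g p = R.1 ⟨p, hp⟩ := hR ⟨p, hp⟩
  have ptR : scalτ g p = (dt V R).1 ⟨p, hp⟩ := hR.fderiv (0, 1) ⟨p, hp⟩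
  have pt : p.2⁻¹ = τi.1 ⟨p, hp⟩ := hτi ⟨p, hp⟩
  have pFi : (hatg g N 0 0 p)⁻¹ = Fi.1 ⟨p, hp⟩ := repFi ⟨p, hp⟩
  have pgrad : gradSq g p = (∑ i, ∑ j, H i j * dx V i R * dx V j R).1 ⟨p, hp⟩ :=
    (Rep.sum fun i => Rep.sum fun j => ((hH i j).mul (hR.fderiv _)).mul (hR.fderiv _)) ⟨p, hp⟩
  refine ⟨?_, ?_, ?_⟩
  · rw [ptF, hTF, ptR, pR, pt]
    change -3 * N * (1 / 2) * τi.1 ⟨p, hp⟩ ^ 4 + (dt V R).1 ⟨p, hp⟩ * τi.1 ⟨p, hp⟩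
      - R.1 ⟨p, hp⟩ * τi.1 ⟨p, hp⟩ ^ 2 + 2 * n * (1 / 2) * τi.1 ⟨p, hp⟩ ^ 3 = _
    ring
  · have e := rep_hatRic rhatg rhatginv (diagBlock_symm hs) 0 0 ⟨p, hp⟩
    rw [hric] at e
    rw [ptF, ptR, pR, pt, pFi, pgrad]
    exact e
  · have repf : Rep (fun q : E n => (N : ℝ) / (2 * q.2)) (N * half * τi : SmoothRing V) :=
      fun q => by
        rw [← ((Rep.natCast N).mul Rep.half).mul hτi q]
        have := (h.pos q q.2).ne'
        field_simp
    have e := rep_hatHess rhatg rhatginv repf 0 0 ⟨p, hp⟩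
    rw [hD_zero, hat_hess hTτi hDτi] at e
    rw [ptF, pt, pFi]
    exact e
end CanonicalSoliton

/-! ### The error term -/

namespace CanonicalSoliton
open Matrix TopologicalSpace
variable {n : ℕ} {V : Opens (E n)}

/-- The part `R/τ - n/(2τ²)` of `ĝ₀₀` that does not depend on `N`. -/
def lower (g : E n → Matrix (Fin n) (Fin n) ℝ) (p : E n) : ℝ :=
  scal g p * p.2⁻¹ - n / 2 * p.2⁻¹ ^ 2

/-- The numerator `B` of the error `R̂₀₀ + ∇̂²₀₀ (N / (2τ)) - ĝ₀₀ / 2 = B / ĝ₀₀`. -/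
def errNum (g : E n → Matrix (Fin n) (Fin n) ℝ) (p : E n) : ℝ :=
  (-(1 / 2) * scalτ g p - 3 * n / 4 * p.2⁻¹ ^ 2 + p.2⁻¹ * scal g p) * lower g p
    + 1 / 2 * (scalτ g p * p.2⁻¹ - scal g p * p.2⁻¹ ^ 2 + n * p.2⁻¹ ^ 3)
      * (scal g p - n / 2 * p.2⁻¹)
    + 1 / 4 * p.2⁻¹ * gradSq g p - 1 / 2 * lower g p ^ 2

lemma hatg_zero_zero (g : E n → Matrix (Fin n) (Fin n) ℝ) (N : ℕ) {p : E n} (hp : 0 < p.2) :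
    hatg g N 0 0 p = N / 2 * p.2⁻¹ ^ 3 + lower g p := by
  change (N : ℝ) / (2 * p.2 ^ 3) + scal g p / p.2 - (n : ℝ) / (2 * p.2 ^ 2) = _
  unfold lower
  field_simp
  ring

/-- The soliton error times `ĝ₀₀` does not depend on `N`: the terms of order `N²` and `N`
in the product cancel. -/
theorem FlowOn.error_mul {g : E n → Matrix (Fin n) (Fin n) ℝ} (h : FlowOn g V) (N : ℕ)
    (hF : ∀ p ∈ V, 0 < hatg g N 0 0 p) {p : E n} (hp : p ∈ V) :
    (hatRic g N 0 0 p + hatHess g N (fun q => (N : ℝ) / (2 * q.2)) 0 0 p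
      - (1 / 2) * hatg g N 0 0 p) * hatg g N 0 0 p = errNum g p := by
  obtain ⟨e1, e2, e3⟩ := h.hat_components N hF p hp
  have hmul : hatg g N 0 0 p * (hatg g N 0 0 p)⁻¹ = 1 := mul_inv_cancel₀ (hF p hp).ne'
  have e0 := hatg_zero_zero g N (h.pos p hp)
  rw [e2, e3]
  generalize (hatg g N 0 0 p)⁻¹ = Fi at *
  generalize hatg g N 0 0 p = F at *
  generalize pdt (hatg g N 0 0) p = F' at *
  unfold errNum
  unfold lower at e0 ⊢
  generalize scal g p = R at *
  generalize scalτ g p = S at *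
  generalize p.2⁻¹ = t at *
  generalize gradSq g p = q at *
  -- `ĝ₀₀⁻¹` enters the error linearly, with the coefficient displayed here
  have key : ((1 / 2) * F' * (R - n / 2 * t) + 1 / 4 * t * q + N / 4 * t ^ 2 * F') * (F * Fi - 1)
      = 0 := by rw [hmul, sub_self, mul_zero]
  subst e1
  rw [e0] at key ⊢
  linear_combination key

lemma FlowOn.continuousOn {g : E n → Matrix (Fin n) (Fin n) ℝ} (h : FlowOn g V) :
    ContinuousOn (lower g) V ∧ ContinuousOn (errNum g) V := by
  obtain ⟨τ, τi, hτ, hτi, -⟩ := exists_time h.pos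
  obtain ⟨G, H, hG, hH, -⟩ := h.exists_metric
  have hR := rep_scal hG hH
  have cR := hR.contDiffOn.continuousOn
  have cS : ContinuousOn (scalτ g) V := (hR.fderiv (0, 1)).contDiffOn.continuousOn
  have ct := hτi.contDiffOn.continuousOn
  have cg : ContinuousOn (gradSq g) V :=
    (Rep.sum fun i => Rep.sum fun j =>
      ((hH i j).mul (hR.fderiv (Pi.single i 1, 0))).mul
        (hR.fderiv (Pi.single j 1, 0))).contDiffOn.continuousOn
  have cl : ContinuousOn (lower g) V := by unfold lower; fun_prop
  refine ⟨cl, ?_⟩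
  unfold errNum
  fun_prop
end CanonicalSoliton

open CanonicalSoliton

theorem stmt14 (n : ℕ) (U : Set (Fin n → ℝ)) (hU : IsOpen U)
    (a b : ℝ) (ha : 0 ≤ a) (hab : a < b)
    (g : E n → Matrix (Fin n) (Fin n) ℝ)
    (hsmooth : ∀ i j, ContDiffOn ℝ (⊤ : ℕ∞) (fun p => g p i j) (U ×ˢ Set.Ioo a b))
    (hsymm : ∀ p ∈ U ×ˢ Set.Ioo a b, (g p).IsSymm)
    (hpos : ∀ p ∈ U ×ˢ Set.Ioo a b, (g p).PosDef)
    (hflow : ∀ p ∈ U ×ˢ Set.Ioo a b, ∀ j k : Fin n,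
      pdt (fun q => g q j k) p = 2 * Ric g j k p)
    (hRbd : ∃ C : ℝ, ∀ p ∈ U ×ˢ Set.Ioo a b, |scal g p| ≤ C) :
    ∀ K : Set (E n), K ⊆ U ×ˢ Set.Ioo a b → IsCompact K →
      ∃ N₀ : ℕ, ∃ C : ℝ, 0 < C ∧ ∀ N : ℕ, N₀ ≤ N →
        (∃ V : Set (E n), IsOpen V ∧ K ⊆ V ∧ V ⊆ U ×ˢ Set.Ioo a b ∧
          ∀ p ∈ V, 0 < hatg g N 0 0 p) ∧
        ∀ p ∈ K, |hatRic g N 0 0 p + hatHess g N (fun q => (N : ℝ) / (2 * q.2)) 0 0 p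
            - (1 / 2) * hatg g N 0 0 p| ≤ C / (N : ℝ) := by
  intro K hK hKc
  have hΩ : IsOpen (U ×ˢ Set.Ioo a b) := hU.prod isOpen_Ioo
  have hfl : FlowOn g ⟨U ×ˢ Set.Ioo a b, hΩ⟩ :=
    { smooth := hsmooth
      symm := hsymm
      det_ne := fun p hp => (hpos p hp).det_pos.ne'
      flow := hflow
      pos := fun p hp => ha.trans_lt hp.2.1 }
  obtain ⟨cl, cB⟩ := hfl.continuousOn
  obtain ⟨M, hM⟩ := hKc.exists_bound_of_continuousOn (cB.mono hK)
  obtain ⟨M₁, hM₁⟩ := hKc.exists_bound_of_continuousOn (cl.mono hK)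
  have hb : 0 < b := ha.trans_lt hab
  obtain ⟨N₁, hN₁⟩ := exists_nat_ge (4 * b ^ 3 * M₁)
  refine ⟨max 1 N₁, 4 * b ^ 3 * (|M| + 1), by positivity, fun N hN => ?_⟩
  have hN1 : (1 : ℝ) ≤ N := by exact_mod_cast (le_max_left _ _).trans hN
  have hNM : 4 * b ^ 3 * M₁ ≤ N := hN₁.trans (by exact_mod_cast (le_max_right _ _).trans hN)
  -- on `K` the leading term `N / (2τ³)` dominates, with half of it to spare
  have hlow : ∀ p ∈ K, N / (4 * b ^ 3) ≤ hatg g N 0 0 p := by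
    intro p hp
    have hp2 : 0 < p.2 := hfl.pos p (hK hp)
    have hpb : p.2 ≤ b := (hK hp).2.2.le
    have h1 := neg_le_of_abs_le (hM₁ p hp)
    have h2 : (b ^ 3)⁻¹ ≤ p.2⁻¹ ^ 3 := by
      rw [inv_pow]; gcongr
    have h3 : M₁ ≤ N / (4 * b ^ 3) := by
      rw [le_div_iff₀ (by positivity)]; linarith
    have h4 : (N : ℝ) / 2 * (b ^ 3)⁻¹ = 2 * (N / (4 * b ^ 3)) := by field_simp; norm_num
    have h5 : (N : ℝ) / 2 * (b ^ 3)⁻¹ ≤ N / 2 * p.2⁻¹ ^ 3 := by gcongr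
    rw [hatg_zero_zero g N hp2]
    linarith
  have hVo : IsOpen ((U ×ˢ Set.Ioo a b) ∩ {p | 0 < hatg g N 0 0 p}) := by
    have hc : ContinuousOn (hatg g N 0 0) (U ×ˢ Set.Ioo a b) := by
      have hi : ContinuousOn (fun p : E n => p.2⁻¹) (U ×ˢ Set.Ioo a b) :=
        continuous_snd.continuousOn.inv₀ fun p hp => (hfl.pos p hp).ne'
      refine ContinuousOn.congr (f := fun p => (N : ℝ) / 2 * p.2⁻¹ ^ 3 + lower g p) ?_
        fun p hp => hatg_zero_zero g N (hfl.pos p hp)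
      have cl' : ContinuousOn (lower g) (U ×ˢ Set.Ioo a b) := cl
      fun_prop
    exact hc.isOpen_inter_preimage hΩ isOpen_Ioi
  have hKV : K ⊆ (U ×ˢ Set.Ioo a b) ∩ {p | 0 < hatg g N 0 0 p} := fun p hp =>
    ⟨hK hp, lt_of_lt_of_le (by positivity) (hlow p hp)⟩
  refine ⟨⟨_, hVo, hKV, Set.inter_subset_left, fun p hp => hp.2⟩, fun p hp => ?_⟩
  have hflV : FlowOn g ⟨_, hVo⟩ :=
    { smooth := fun i j => (hsmooth i j).mono Set.inter_subset_left
      symm := fun p hp => hfl.symm p hp.1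
      det_ne := fun p hp => hfl.det_ne p hp.1
      flow := fun p hp => hfl.flow p hp.1
      pos := fun p hp => hfl.pos p hp.1 }
  have key := hflV.error_mul N (fun q hq => hq.2) (hKV hp)
  have hF : 0 < hatg g N 0 0 p := (hKV hp).2
  have hB : |errNum g p| ≤ |M| + 1 :=
    (hM p hp).trans ((le_abs_self M).trans (by linarith))
  rw [← key, abs_mul, abs_of_pos hF] at hB
  have h1 := (mul_le_mul_of_nonneg_left (hlow p hp) (abs_nonneg _)).trans hB
  rw [← mul_div_assoc, div_le_iff₀ (by positivity)] at h1
  rw [le_div_iff₀ (by linarith)]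
  linarith
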